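/- Suppose k_i = k for all i ∈ [n]. Then for any 1 ≤ r ≤ n·M_w, the number of x ∈ 𝔽_q^N with w_{(P,w,π)}(x) = r is |A_r| = Σ_{i=1}^{n} Σ_{j=1}^{i} Σ_{I ∈ 𝓘_j^i} Σ_{(b_1,…,b_j) ∈ PRT_{i−j}[r] having exactly j parts} q^{k(i−j)} · Π_{s=1}^{l} |D_{t_s}^k|^{r_s} · C(j − (r_1+r_2+⋯+r_{s−1}), r_s), where t_1,…,t_l are the distinct values among the parts b_1,…,b_j, r_s is the multiplicity of t_s (so r_1+⋯+r_l = j), r_0 = 0, and C(a,b) denotes the binomial coefficient. -/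

import Mathlib

open scoped Classical

noncomputable section

variable {F : Type*} [Field F] [Fintype F]
variable {ι : Type*} [Fintype ι] [PartialOrder ι]

/-- The block weight induced by `w`: the maximum of the weights of the coordinates. -/
def blockWt (w : F → ℕ) {m : ℕ} (v : Fin m → F) : ℕ :=
  Finset.univ.sup fun t => w (v t)

/-- `M_w`, the maximum weight of an element of `F`. -/
def maxWt (w : F → ℕ) : ℕ := Finset.univ.sup w

/-- `D_r = {α ∈ F : w(α) = r}`. -/
def Dset (w : F → ℕ) (r : ℕ) : Finset F := Finset.univ.filter fun a => w a = r

/-- `D_r^k = {v ∈ F^k : w̃^k(v) = r}`. -/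
def Dk (w : F → ℕ) (m r : ℕ) : Finset (Fin m → F) :=
  Finset.univ.filter fun v => blockWt w v = r

/-- The order ideal (down-set) of the poset generated by a finite set `A`. -/
def genIdeal (A : Finset ι) : Finset ι := Finset.univ.filter fun i => ∃ j ∈ A, i ≤ j

/-- The set of maximal elements of a finite set `I`. -/
def maxElems (I : Finset ι) : Finset ι := I.filter fun i => ∀ j ∈ I, i ≤ j → j = i

/-- `I` is an order ideal (down-set) of the poset. -/
def IsIdeal (I : Finset ι) : Prop := ∀ a b : ι, a ≤ b → b ∈ I → a ∈ I

/-- The collection `𝓘_j^i` of ideals of cardinality `i` with exactly `j` maximal elements. -/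
def idealsWithMax (ι : Type*) [Fintype ι] [PartialOrder ι] (j i : ℕ) : Finset (Finset ι) :=
  Finset.univ.filter fun I => IsIdeal I ∧ I.card = i ∧ (maxElems I).card = j

/-- The π-support of a block vector. -/
def suppPi (k : ι → ℕ) (x : ∀ i, Fin (k i) → F) : Finset ι :=
  Finset.univ.filter fun i => x i ≠ 0

/-- The `(P,w,π)`-weight. -/
def wtP (w : F → ℕ) (k : ι → ℕ) (x : ∀ i, Fin (k i) → F) : ℕ :=
  ∑ i ∈ maxElems (genIdeal (suppPi k x)), blockWt w (x i)
    + maxWt w * ((genIdeal (suppPi k x)) \ maxElems (genIdeal (suppPi k x))).card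

/-- The `(P,w,π)`-distance. -/
def dP (w : F → ℕ) (k : ι → ℕ) (x y : ∀ i, Fin (k i) → F) : ℕ := wtP w k (x - y)

/-- `PRT_m[r]` restricted to partitions with exactly `j` parts: partitions of `r - m·M_w`
into parts each in `{1,…,R}`, with between `1` and `n - m` parts, and exactly `j` parts. -/
def PRTparts (n R m r j : ℕ) : Finset (Nat.Partition (r - m * R)) :=
  Finset.univ.filter fun p => p.parts.card = j ∧ (∀ x ∈ p.parts, x ≤ R) ∧
    1 ≤ p.parts.card ∧ p.parts.card ≤ n - m

/-!
Fix the ideal `I = I_x`. The vectors `x` with `I_x = I` form a box: a block of `x` is nonzero at the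
maximal elements of `I`, arbitrary at the other elements of `I`, and zero outside `I`. On this box
the weight of `x` depends only on the multiset of block weights at the maximal elements, and `x` has
weight `r` exactly when this multiset is a partition in `PRT_{|I| - |Max I|}[r]`.

Vectors of the box with a prescribed multiset of weights are counted by a generating function:
recording a block of weight `t` by the variable `X_t`, the polynomial of the box is
`q ^ (k * |I ∖ Max I|) * (∑ t ≥ 1, |D_t^k| * X_t) ^ |Max I|`, and the multinomial theorem gives its
coefficients. The product of binomial coefficients in the formula is the multinomial coefficient,
obtained by choosing the places of the largest part first, then those of the next one, and so on.
-/

section Multinomial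

variable {α : Type*}

theorem multinomial_eq_prod_choose [LinearOrder α] (s : Finset α) (f : α → ℕ) :
    Nat.multinomial s f = ∏ t ∈ s, (∑ u ∈ s with u ≤ t, f u).choose (f t) := by
  induction s using Finset.induction_on_max with
  | empty => simp
  | insert a s hlt ih =>
    have ha : a ∉ s := fun h => (hlt a h).false
    rw [Nat.multinomial_insert ha, Finset.prod_insert ha, ih]
    congr 1
    · rw [Finset.filter_true_of_mem, Finset.sum_insert ha]
      simpa using fun u hu => (hlt u hu).le
    · refine Finset.prod_congr rfl fun t ht => ?_
      rw [Finset.filter_insert, if_neg (hlt t ht).not_ge]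

theorem card_sub_countP_lt [LinearOrder α] (m : Multiset α) (t : α) :
    m.card - m.countP (t < ·) = ∑ u ∈ m.toFinset with u ≤ t, m.count u := by
  have hcard : m.card = (m.filter (· ≤ t)).card + m.countP (t < ·) := by
    rw [m.card_eq_countP_add_countP (· ≤ t), Multiset.countP_eq_card_filter (· ≤ t)]
    simp only [not_le]
  rw [hcard, Nat.add_sub_cancel, ← Multiset.toFinset_sum_count_eq, Multiset.toFinset_filter]
  refine Finset.sum_congr rfl fun u hu => ?_
  exact Multiset.count_filter_of_pos (p := (· ≤ t)) (Finset.mem_filter.1 hu).2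

theorem countPerms_eq_prod_choose [LinearOrder α] (m : Multiset α) :
    m.countPerms =
      ∏ t ∈ m.toFinset, (m.card - m.countP (t < ·)).choose (m.count t) := by
  simp only [card_sub_countP_lt]
  exact multinomial_eq_prod_choose _ _

theorem coeff_sum_X_pow_card [DecidableEq α] {V : Type*} (S : Finset V) (f : V → α)
    (m : Multiset α) :
    MvPolynomial.coeff m.toFinsupp ((∑ v ∈ S, MvPolynomial.X (f v)) ^ m.card) =
      m.countPerms * ∏ t ∈ m.toFinset, (S.filter fun v => f v = t).card ^ m.count t := by
  let a : α →₀ ℕ := ∑ v ∈ S, Finsupp.single (f v) 1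
  have ha (t : α) : a t = (S.filter fun v => f v = t).card := by
    simp [a, Finsupp.finsetSum_apply, Finsupp.single_apply]
  have hsum : ∑ v ∈ S, MvPolynomial.X (f v) =
      Finsupp.linearCombination ℕ (MvPolynomial.X : α → MvPolynomial α ℕ) a := by
    simp [a]
  have hcard : m.toFinsupp.sum (fun _ c => c) = m.card := Multiset.toFinsupp_sum_eq m
  rw [hsum, MvPolynomial.coeff_linearCombination_X_pow, if_pos hcard]
  simp [Finsupp.prod, ha, Multiset.countPerms]

end Multinomial

section Box

variable {κ V α : Type*} [Fintype κ]

theorem sum_piFinset_prod_subset [DecidableEq κ] {R : Type*} [CommSemiring R] (C : κ → Finset V)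
    (T : Finset κ) (g : κ → V → R) :
    ∑ x ∈ Fintype.piFinset C, ∏ i ∈ T, g i (x i) =
      (∏ i ∈ Tᶜ, ((C i).card : R)) * ∏ i ∈ T, ∑ v ∈ C i, g i v := by
  calc ∑ x ∈ Fintype.piFinset C, ∏ i ∈ T, g i (x i)
      = ∑ x ∈ Fintype.piFinset C, ∏ i, if i ∈ T then g i (x i) else 1 := by
        simp only [Finset.prod_ite_mem, Finset.univ_inter]
    _ = ∏ i, ∑ v ∈ C i, if i ∈ T then g i v else 1 := by
        rw [Finset.prod_univ_sum]
    _ = (∏ i ∈ Tᶜ, ((C i).card : R)) * ∏ i ∈ T, ∑ v ∈ C i, g i v := by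
        rw [← Finset.prod_compl_mul_prod T]
        congr 1
        · refine Finset.prod_congr rfl fun i hi => ?_
          simp [Finset.mem_compl.1 hi]
        · exact Finset.prod_congr rfl fun i hi => by simp only [if_pos hi]

theorem card_filter_piFinset_map_eq [DecidableEq κ] [DecidableEq α] {C : κ → Finset V}
    {T : Finset κ} {S : Finset V} (hC : ∀ i ∈ T, C i = S) (f : V → α) {m : Multiset α}
    (hm : m.card = T.card) :
    ((Fintype.piFinset C).filter fun x => T.val.map (fun i => f (x i)) = m).card =
      (∏ i ∈ Tᶜ, (C i).card) *
        (m.countPerms * ∏ t ∈ m.toFinset, (S.filter fun v => f v = t).card ^ m.count t) := by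
  have hmonomial (x : κ → V) : ∏ i ∈ T, MvPolynomial.X (f (x i)) =
      MvPolynomial.monomial (T.val.map fun i => f (x i)).toFinsupp (1 : ℕ) := by
    have hmap : (T.val.map fun i => f (x i)) = ∑ i ∈ T, {f (x i)} := by
      simpa using (Multiset.sum_map_singleton (T.val.map fun i => f (x i))).symm
    simp only [MvPolynomial.X, ← MvPolynomial.monomial_sum_one, hmap, map_sum,
      Multiset.toFinsupp_singleton]
  calc ((Fintype.piFinset C).filter fun x => T.val.map (fun i => f (x i)) = m).card
      = MvPolynomial.coeff m.toFinsupp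
          (∑ x ∈ Fintype.piFinset C, ∏ i ∈ T, MvPolynomial.X (f (x i))) := by
        simp [hmonomial, MvPolynomial.coeff_sum, MvPolynomial.coeff_monomial]
    _ = (∏ i ∈ Tᶜ, (C i).card) *
          MvPolynomial.coeff m.toFinsupp ((∑ v ∈ S, MvPolynomial.X (f v)) ^ m.card) := by
        have hpow : ∏ i ∈ T, ∑ v ∈ C i, MvPolynomial.X (R := ℕ) (f v) =
            (∑ v ∈ S, MvPolynomial.X (f v)) ^ m.card :=
          hm ▸ Finset.prod_eq_pow_card fun i hi => by rw [hC i hi]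
        rw [sum_piFinset_prod_subset C T fun _ v => MvPolynomial.X (f v), hpow,
          ← Nat.cast_prod, ← MvPolynomial.C_eq_coe_nat, MvPolynomial.coeff_C_mul, Nat.cast_id]
    _ = _ := by rw [coeff_sum_X_pow_card]

end Box

section Ideal

theorem maxElems_subset (I : Finset ι) : maxElems I ⊆ I :=
  Finset.filter_subset _ _

theorem exists_le_mem_maxElems {I : Finset ι} {i : ι} (hi : i ∈ I) :
    ∃ j ∈ maxElems I, i ≤ j := by
  obtain ⟨j, hij, hj⟩ := I.exists_le_maximal hi
  exact ⟨j, Finset.mem_filter.2 ⟨hj.1, fun l hl hjl => (hj.eq_of_le hl hjl).symm⟩, hij⟩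

theorem maxElems_nonempty {I : Finset ι} (hI : I.Nonempty) : (maxElems I).Nonempty := by
  obtain ⟨i, hi⟩ := hI
  obtain ⟨j, hj, -⟩ := exists_le_mem_maxElems hi
  exact ⟨j, hj⟩

theorem mem_genIdeal {A : Finset ι} {i : ι} : i ∈ genIdeal A ↔ ∃ j ∈ A, i ≤ j := by
  simp [genIdeal]

theorem isIdeal_genIdeal (A : Finset ι) : IsIdeal (genIdeal A) := by
  intro a b hab hb
  obtain ⟨j, hj, hbj⟩ := mem_genIdeal.1 hb
  exact mem_genIdeal.2 ⟨j, hj, hab.trans hbj⟩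

theorem subset_genIdeal (A : Finset ι) : A ⊆ genIdeal A :=
  fun i hi => mem_genIdeal.2 ⟨i, hi, le_rfl⟩

theorem maxElems_genIdeal_subset (A : Finset ι) : maxElems (genIdeal A) ⊆ A := by
  intro i hi
  obtain ⟨hiA, hmax⟩ := Finset.mem_filter.1 hi
  obtain ⟨j, hj, hij⟩ := mem_genIdeal.1 hiA
  exact hmax j (subset_genIdeal A hj) hij ▸ hj

theorem genIdeal_eq_iff {A I : Finset ι} (hI : IsIdeal I) :
    genIdeal A = I ↔ maxElems I ⊆ A ∧ A ⊆ I := by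
  constructor
  · rintro rfl
    exact ⟨maxElems_genIdeal_subset A, subset_genIdeal A⟩
  · rintro ⟨hmax, hsub⟩
    refine Finset.Subset.antisymm (fun i hi => ?_) fun i hi => ?_
    · obtain ⟨j, hj, hij⟩ := mem_genIdeal.1 hi
      exact hI i j hij (hsub hj)
    · obtain ⟨j, hj, hij⟩ := exists_le_mem_maxElems hi
      exact mem_genIdeal.2 ⟨j, hmax hj, hij⟩

theorem sum_idealsWithMax {M : Type*} [AddCommMonoid M] (g : ℕ → ℕ → Finset ι → M) :
    ∑ i ∈ Finset.Icc 1 (Fintype.card ι), ∑ j ∈ Finset.Icc 1 i, ∑ I ∈ idealsWithMax ι j i, g i j I =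
      ∑ I : Finset ι with IsIdeal I ∧ I.Nonempty, g I.card (maxElems I).card I := by
  let sizes : Finset (Σ _ : ℕ, ℕ) := (Finset.Icc 1 (Fintype.card ι)).sigma (Finset.Icc 1)
  have hmaps : ∀ I ∈ Finset.univ.filter fun I : Finset ι => IsIdeal I ∧ I.Nonempty,
      (⟨I.card, (maxElems I).card⟩ : Σ _ : ℕ, ℕ) ∈ sizes := by
    intro I hI
    have hne := (Finset.mem_filter.1 hI).2.2
    exact Finset.mem_sigma.2
      ⟨Finset.mem_Icc.2 ⟨hne.card_pos, I.card_le_univ⟩,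
        Finset.mem_Icc.2 ⟨(maxElems_nonempty hne).card_pos,
          Finset.card_le_card (maxElems_subset I)⟩⟩
  rw [Finset.sum_sigma', ← Finset.sum_fiberwise_of_maps_to hmaps]
  refine Finset.sum_congr rfl fun ⟨i, j⟩ hij => Finset.sum_congr ?_ fun I hI => ?_
  · ext I
    have hi : 1 ≤ i := (Finset.mem_Icc.1 (Finset.mem_sigma.1 hij).1).1
    simp only [idealsWithMax, Finset.mem_filter, Finset.mem_univ, true_and, Sigma.mk.injEq,
      heq_eq_eq, ← Finset.card_pos]
    constructor
    · rintro ⟨hI, rfl, rfl⟩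
      exact ⟨⟨hI, hi⟩, rfl, rfl⟩
    · rintro ⟨⟨hI, -⟩, hcard, hmax⟩
      exact ⟨hI, hcard, hmax⟩
  · obtain ⟨-, rfl, rfl⟩ := (Finset.mem_filter.1 hI).2
    rfl

end Ideal

section BlockWeight

variable {R : Type*} {w : R → ℕ} {m : ℕ}

theorem blockWt_le_maxWt [Fintype R] (w : R → ℕ) (v : Fin m → R) : blockWt w v ≤ maxWt w :=
  Finset.sup_le fun t _ => Finset.le_sup (f := w) (Finset.mem_univ (v t))

theorem blockWt_eq_zero_iff [Zero R] (hw0 : ∀ a : R, w a = 0 ↔ a = 0) (v : Fin m → R) :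
    blockWt w v = 0 ↔ v = 0 := by
  rw [blockWt, ← bot_eq_zero, Finset.sup_eq_bot_iff]
  simp [hw0, funext_iff]

theorem filter_blockWt_compl_zero [Zero R] [Fintype R] (hw0 : ∀ a : R, w a = 0 ↔ a = 0) {t : ℕ}
    (ht : t ≠ 0) : ({0}ᶜ : Finset (Fin m → R)).filter (fun v => blockWt w v = t) = Dk w m t := by
  ext v
  simp only [Dk, Finset.mem_filter, Finset.mem_compl, Finset.mem_singleton, Finset.mem_univ,
    true_and, and_iff_right_iff_imp, ← blockWt_eq_zero_iff hw0]
  exact fun hv => hv.trans_ne ht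

end BlockWeight

section Distribution

/-- The box of all vectors `x` with `I_x = I`, as the family of the sets of admissible values for
the blocks of `x`. -/
def idealBlocks (k : ι → ℕ) (I : Finset ι) (i : ι) : Finset (Fin (k i) → F) :=
  if i ∈ maxElems I then {0}ᶜ else if i ∈ I then Finset.univ else {0}

/-- The multiset of the weights of the blocks of `x` at the maximal elements of `I`. When
`I = I_x` and `x` has weight `r`, its elements are the parts of the partition in
`PRT_{|I| - |Max I|}[r]` attached to `x`. -/
def maxBlockWts {R : Type*} (w : R → ℕ) {k : ι → ℕ} (I : Finset ι) (x : ∀ i, Fin (k i) → R) :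
    Multiset ℕ :=
  (maxElems I).val.map fun i => blockWt w (x i)

variable {w : F → ℕ} {I : Finset ι}

theorem filter_genIdeal_suppPi_eq (k : ι → ℕ) (hI : IsIdeal I) :
    (Finset.univ.filter fun x : ∀ i, Fin (k i) → F => genIdeal (suppPi k x) = I) =
      Fintype.piFinset (idealBlocks k I) := by
  ext x
  simp only [Finset.mem_filter, Finset.mem_univ, true_and, Fintype.mem_piFinset,
    genIdeal_eq_iff hI, Finset.subset_iff, suppPi, ← forall_and]
  refine forall_congr' fun i => ?_
  have hsub := @maxElems_subset _ _ _ I i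
  by_cases hmax : i ∈ maxElems I <;> by_cases hi : i ∈ I <;> simp_all [idealBlocks]

theorem prod_card_idealBlocks_compl (k : ι → ℕ) (I : Finset ι) :
    ∏ i ∈ (maxElems I)ᶜ, (idealBlocks (F := F) k I i).card =
      ∏ i ∈ I \ maxElems I, Fintype.card F ^ k i := by
  have hsub : I \ maxElems I ⊆ (maxElems I)ᶜ := fun i hi =>
    Finset.mem_compl.2 (Finset.mem_sdiff.1 hi).2
  rw [← Finset.prod_subset hsub]
  · refine Finset.prod_congr rfl fun i hi => ?_
    obtain ⟨hi, hmax⟩ := Finset.mem_sdiff.1 hi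
    simp [idealBlocks, hi, hmax]
  · intro i hmax hi
    rw [Finset.mem_compl] at hmax
    have hiI : i ∉ I := fun h => hi (Finset.mem_sdiff.2 ⟨h, hmax⟩)
    simp [idealBlocks, hmax, hiI]

theorem card_genIdeal_eq_and_maxBlockWts_eq (hw0 : ∀ a : F, w a = 0 ↔ a = 0) (k : ℕ)
    (hI : IsIdeal I) {m : Multiset ℕ} (hm : m.card = (maxElems I).card) (hm0 : ∀ t ∈ m, t ≠ 0) :
    (Finset.univ.filter fun x : ∀ _ : ι, Fin k → F =>
        genIdeal (suppPi (fun _ => k) x) = I ∧ maxBlockWts w I x = m).card =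
      Fintype.card F ^ (k * (I.card - (maxElems I).card)) *
        (m.countPerms * ∏ t ∈ m.toFinset, (Dk w k t).card ^ m.count t) := by
  have hfree : ∏ i ∈ (maxElems I)ᶜ, (idealBlocks (F := F) (fun _ => k) I i).card =
      Fintype.card F ^ (k * (I.card - (maxElems I).card)) := by
    rw [prod_card_idealBlocks_compl, Finset.prod_const, ← pow_mul,
      Finset.card_sdiff_of_subset (maxElems_subset I)]
  have hDk : ∀ t ∈ m.toFinset,
      (({0}ᶜ : Finset (Fin k → F)).filter fun v => blockWt w v = t).card ^ m.count t =
        (Dk w k t).card ^ m.count t := fun t ht => by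
    rw [filter_blockWt_compl_zero hw0 (hm0 t (Multiset.mem_toFinset.1 ht))]
  rw [← Finset.filter_filter, filter_genIdeal_suppPi_eq _ hI, ← hfree, ← Finset.prod_congr rfl hDk]
  exact card_filter_piFinset_map_eq (fun i hi => if_pos hi) (blockWt w) hm

theorem wtP_eq_sum_maxBlockWts_add {k : ι → ℕ} {x : ∀ i, Fin (k i) → F}
    (hx : genIdeal (suppPi k x) = I) :
    wtP w k x = (maxBlockWts w I x).sum + (I.card - (maxElems I).card) * maxWt w := by
  rw [wtP, hx, Finset.card_sdiff_of_subset (maxElems_subset I), mul_comm]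
  rfl

theorem maxBlockWts_pos {K : Type*} [Field K] {w : K → ℕ} (hw0 : ∀ a : K, w a = 0 ↔ a = 0)
    {k : ι → ℕ} {x : ∀ i, Fin (k i) → K} (hx : genIdeal (suppPi k x) = I) {t : ℕ}
    (ht : t ∈ maxBlockWts w I x) : 0 < t := by
  subst hx
  obtain ⟨i, hi, rfl⟩ := Multiset.mem_map.1 ht
  have hxi : x i ≠ 0 := (Finset.mem_filter.1 (maxElems_genIdeal_subset _ hi)).2
  exact Nat.pos_of_ne_zero fun h => hxi ((blockWt_eq_zero_iff hw0 _).1 h)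

theorem wtP_eq_iff_exists_mem_PRTparts (hw0 : ∀ a : F, w a = 0 ↔ a = 0) {k : ι → ℕ}
    {x : ∀ i, Fin (k i) → F} (hx : genIdeal (suppPi k x) = I) (hne : I.Nonempty) (r : ℕ) :
    wtP w k x = r ↔
      ∃ p ∈ PRTparts (Fintype.card ι) (maxWt w) (I.card - (maxElems I).card) r (maxElems I).card,
        p.parts = maxBlockWts w I x := by
  have hcard : (maxBlockWts w I x).card = (maxElems I).card := Multiset.card_map _ _
  have hpos : 0 < (maxElems I).card := (maxElems_nonempty hne).card_pos
  rw [wtP_eq_sum_maxBlockWts_add hx]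
  constructor
  · intro hr
    refine ⟨⟨maxBlockWts w I x, maxBlockWts_pos hw0 hx, by lia⟩, ?_, rfl⟩
    have hle : ∀ t ∈ maxBlockWts w I x, t ≤ maxWt w :=
      Multiset.forall_mem_map_iff.2 fun i _ => blockWt_le_maxWt w (x i)
    have hsub := Finset.card_le_card (maxElems_subset I)
    have huniv := I.card_le_univ
    simp only [PRTparts, Finset.mem_filter, Finset.mem_univ, true_and]
    exact ⟨hcard, hle, by lia, by lia⟩
  · rintro ⟨p, -, hp⟩
    obtain ⟨t, ht⟩ := Multiset.card_pos_iff_exists_mem.1 (hcard ▸ hpos)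
    have htsum : t ≤ (maxBlockWts w I x).sum := Multiset.single_le_sum (by simp) t ht
    have htpos := maxBlockWts_pos hw0 hx ht
    have hsum := p.parts_sum
    rw [hp] at hsum
    lia

theorem card_wtP_eq_and_genIdeal_eq (hw0 : ∀ a : F, w a = 0 ↔ a = 0) (k : ι → ℕ)
    (hne : I.Nonempty) (r : ℕ) :
    (Finset.univ.filter fun x : ∀ i, Fin (k i) → F =>
        wtP w k x = r ∧ genIdeal (suppPi k x) = I).card =
      ∑ p ∈ PRTparts (Fintype.card ι) (maxWt w) (I.card - (maxElems I).card) r (maxElems I).card,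
        (Finset.univ.filter fun x : ∀ i, Fin (k i) → F =>
          genIdeal (suppPi k x) = I ∧ maxBlockWts w I x = p.parts).card := by
  rw [← Finset.card_biUnion]
  · congr 1
    ext x
    simp only [Finset.mem_filter, Finset.mem_univ, true_and, Finset.mem_biUnion]
    constructor
    · rintro ⟨hr, hx⟩
      obtain ⟨p, hp, hparts⟩ := (wtP_eq_iff_exists_mem_PRTparts hw0 hx hne r).1 hr
      exact ⟨p, hp, hx, hparts.symm⟩
    · rintro ⟨p, hp, hx, hparts⟩
      exact ⟨(wtP_eq_iff_exists_mem_PRTparts hw0 hx hne r).2 ⟨p, hp, hparts.symm⟩, hx⟩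
  · intro p _ p' _ hpp'
    refine Finset.disjoint_filter.2 fun x _ hx hx' => hpp' ?_
    exact Nat.Partition.ext (hx.2.symm.trans hx'.2)

theorem card_wtP_eq_sum_ideals (w : F → ℕ) (k : ι → ℕ) {r : ℕ} (hr : r ≠ 0) :
    (Finset.univ.filter fun x : ∀ i, Fin (k i) → F => wtP w k x = r).card =
      ∑ I : Finset ι with IsIdeal I ∧ I.Nonempty,
        (Finset.univ.filter fun x : ∀ i, Fin (k i) → F =>
          wtP w k x = r ∧ genIdeal (suppPi k x) = I).card := by
  simp only [← Finset.filter_filter _ fun x => genIdeal (suppPi k x) = _]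
  refine Finset.card_eq_sum_card_fiberwise fun x hx => ?_
  simp only [Finset.coe_filter, Finset.mem_univ, true_and] at hx ⊢
  refine ⟨isIdeal_genIdeal _, Finset.nonempty_iff_ne_empty.2 fun hempty => hr ?_⟩
  rw [← show wtP w k x = r from hx, wtP_eq_sum_maxBlockWts_add hempty]
  simp [maxBlockWts, maxElems]

end Distribution

theorem stmt4_general (w : F → ℕ) (hw0 : ∀ a : F, w a = 0 ↔ a = 0) (k : ℕ) {r : ℕ} (hr : r ≠ 0) :
    (Finset.univ.filter fun x : ∀ _ : ι, Fin k → F =>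
        wtP w (fun _ => k) x = r).card =
      ∑ i ∈ Finset.Icc 1 (Fintype.card ι), ∑ j ∈ Finset.Icc 1 i,
        ∑ _I ∈ idealsWithMax ι j i,
          ∑ p ∈ PRTparts (Fintype.card ι) (maxWt w) (i - j) r j,
            Fintype.card F ^ (k * (i - j)) *
              ∏ t ∈ p.parts.toFinset,
                (Dk w k t).card ^ p.parts.count t *
                  Nat.choose (j - Multiset.countP (fun x => t < x) p.parts)
                    (p.parts.count t) := by
  rw [card_wtP_eq_sum_ideals w _ hr, sum_idealsWithMax]
  refine Finset.sum_congr rfl fun I hI => ?_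
  obtain ⟨hideal, hne⟩ := (Finset.mem_filter.1 hI).2
  rw [card_wtP_eq_and_genIdeal_eq hw0 _ hne]
  refine Finset.sum_congr rfl fun p hp => ?_
  have hcard : p.parts.card = (maxElems I).card := (Finset.mem_filter.1 hp).2.1
  rw [card_genIdeal_eq_and_maxBlockWts_eq hw0 k hideal hcard fun t ht => (p.parts_pos ht).ne',
    countPerms_eq_prod_choose, mul_comm (Finset.prod _ _), ← Finset.prod_mul_distrib, hcard]

/-- the weight distribution of the `(P,w,π)`-space when all blocks have the same
dimension `k`, expressed via partitions, the multiplicities `r_s` of their distinct parts `t_s`,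
and binomial coefficients `C(j - (r_1 + ⋯ + r_{s-1}), r_s)`. -/
theorem stmt4 (w : F → ℕ) (hw0 : ∀ a : F, w a = 0 ↔ a = 0)
    (hwneg : ∀ a : F, w (-a) = w a) (hwadd : ∀ a b : F, w (a + b) ≤ w a + w b)
    (k : ℕ) (r : ℕ) (hr1 : 1 ≤ r) (hr2 : r ≤ Fintype.card ι * maxWt w) :
    (Finset.univ.filter fun x : ∀ _ : ι, Fin k → F =>
        wtP w (fun _ => k) x = r).card =
      ∑ i ∈ Finset.Icc 1 (Fintype.card ι), ∑ j ∈ Finset.Icc 1 i,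
        ∑ I ∈ idealsWithMax ι j i,
          ∑ p ∈ PRTparts (Fintype.card ι) (maxWt w) (i - j) r j,
            Fintype.card F ^ (k * (i - j)) *
              ∏ t ∈ p.parts.toFinset,
                (Dk w k t).card ^ p.parts.count t *
                  Nat.choose (j - Multiset.countP (fun x => t < x) p.parts)
                    (p.parts.count t) := by
  exact stmt4_general w hw0 k (Nat.one_le_iff_ne_zero.1 hr1)
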